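/- Let f, τ : ℝ → ℂ be 2π-periodic and C^∞, with τ′(α) ≠ 0 for all α and τ(α) ≠ τ(β) whenever α − β is not an integer multiple of 2π, and let ρ be a filter function. For a discrete function q define I_h(q)_i = (h/π) Σ_{j, (j−i) odd} f(α_j) q_j / (τ(α_j) − τ(α_i)) and K_{1h}(q)_i = (h/π) Σ_{j, (j−i) odd} q_j [ f(α_j)/(τ(α_j) − τ(α_i)) − (f(α_i)/(2τ′(α_i))) cot((α_j − α_i)/2) ], both sums over j ∈ {−N/2+1, …, N/2} with j − i odd. Then for every even N ≥ 2 and every discrete q, I_h(q)_i = −(f(α_i)/(2τ′(α_i)))(H_h q)_i + K_{1h}(q)_i for all i, and there exists a constant c > 0, depending only on f, τ and ρ and not on N or φ, such that ‖D_h^k(K_{1h}(φ^p))‖_{l²} ≤ c ‖φ‖_{l²} for every discrete φ and every k ∈ {0, 1, 2}. -/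

import Mathlib

open scoped BigOperators
open Finset

noncomputable section

/-- Grid spacing `h = 2π/N`. -/
def hgrid (N : ℤ) : ℝ := 2 * Real.pi / N

/-- Grid points `α_j = j h`. -/
def gridPt (N : ℤ) (j : ℤ) : ℝ := j * hgrid N

/-- Index set `{-N/2+1, …, N/2}`. -/
def idxs (N : ℤ) : Finset ℤ := Finset.Icc (-(N / 2) + 1) (N / 2)

/-- Discrete Fourier coefficient `f̂_k`. -/
def dft (N : ℤ) (f : ℤ → ℂ) (k : ℤ) : ℂ :=
  (N : ℂ)⁻¹ * ∑ j ∈ idxs N, f j * Complex.exp (-(Complex.I * (k : ℂ) * (gridPt N j : ℂ)))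

/-- Reconstruction of a discrete function from Fourier coefficients. -/
def idft (N : ℤ) (c : ℤ → ℂ) (j : ℤ) : ℂ :=
  ∑ k ∈ idxs N, c k * Complex.exp (Complex.I * (k : ℂ) * (gridPt N j : ℂ))

/-- The pseudo-spectral derivative `S_h`. -/
def Sh (N : ℤ) (f : ℤ → ℂ) : ℤ → ℂ :=
  idft N fun k => if k = N / 2 then 0 else Complex.I * (k : ℂ) * dft N f k

/-- The pseudo-spectral antiderivative `S_h⁻¹`. -/
def Shinv (N : ℤ) (f : ℤ → ℂ) : ℤ → ℂ :=
  idft N fun k => if k = 0 then 0 else dft N f k / (Complex.I * (k : ℂ))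

/-- The filtered discrete function `f^p`. -/
def filterP (N : ℤ) (ρ : ℝ → ℝ) (f : ℤ → ℂ) : ℤ → ℂ :=
  idft N fun k => (ρ (gridPt N k) : ℂ) * dft N f k

/-- The filtered derivative `D_h`. -/
def Dh (N : ℤ) (ρ : ℝ → ℝ) (f : ℤ → ℂ) : ℤ → ℂ :=
  idft N fun k => Complex.I * (k : ℂ) * (ρ (gridPt N k) : ℂ) * dft N f k

/-- Discrete `l²` norm. -/
def l2norm (N : ℤ) (f : ℤ → ℂ) : ℝ :=
  Real.sqrt (hgrid N * ∑ j ∈ idxs N, ‖f j‖ ^ 2)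

/-- Discrete Hilbert transform `H_h`. -/
def Hh (N : ℤ) (f : ℤ → ℂ) (i : ℤ) : ℂ :=
  ((hgrid N / Real.pi : ℝ) : ℂ) *
    ∑ j ∈ (idxs N).filter (fun j => Odd (j - i)),
      f j * (Real.cot ((gridPt N i - gridPt N j) / 2) : ℂ)

/-- Discrete inner product `(f,g)_h`. -/
def dip (N : ℤ) (f g : ℤ → ℂ) : ℂ :=
  (hgrid N : ℂ) * ∑ j ∈ idxs N, (starRingEnd ℂ) (f j) * g j

/-- Discrete mean `⟨f⟩_h`. -/
def dmean (N : ℤ) (f : ℤ → ℂ) : ℂ :=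
  (N : ℂ)⁻¹ * ∑ j ∈ idxs N, f j

/-- The discrete function of samples of a periodic function. -/
def samples (N : ℤ) (f : ℝ → ℂ) : ℤ → ℂ := fun j => f (gridPt N j)

/-- Fourier coefficient of a `2π`-periodic function. -/
def fourierCoeffP (f : ℝ → ℂ) (k : ℤ) : ℂ :=
  ((2 * Real.pi)⁻¹ : ℝ) * ∫ α in (-Real.pi)..Real.pi, f α * Complex.exp (-(Complex.I * (k : ℂ) * (α : ℂ)))

/-- Sobolev norm `‖f‖_s`. -/
def sobolevNorm (s : ℕ) (f : ℝ → ℂ) : ℝ :=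
  Real.sqrt (∑' k : ℤ, (1 + (k : ℝ) ^ 2) ^ s * ‖fourierCoeffP f k‖ ^ 2)

/-- A filter (cutoff) function for numerical filtering. -/
structure IsFilter (ρ : ℝ → ℝ) : Prop where
  even : ∀ x, ρ (-x) = ρ x
  nonneg : ∀ x, 0 ≤ ρ x
  smooth : ∃ r : ℕ, 2 < r ∧ ContDiff ℝ r ρ
  zero_at_pi : ρ Real.pi = 0
  zero_at_neg_pi : ρ (-Real.pi) = 0
  deriv_zero_at_pi : deriv ρ Real.pi = 0
  deriv_zero_at_neg_pi : deriv ρ (-Real.pi) = 0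
  one_near_zero : ∃ μ : ℝ, 0 < μ ∧ μ < 1 ∧ ∀ x : ℝ, |x| ≤ μ * Real.pi → ρ x = 1

/-- The singular sum `I_h`. -/
def Ih (N : ℤ) (f τ : ℝ → ℂ) (q : ℤ → ℂ) (i : ℤ) : ℂ :=
  ((hgrid N / Real.pi : ℝ) : ℂ) * ∑ j ∈ (idxs N).filter (fun j => Odd (j - i)),
    f (gridPt N j) * q j / (τ (gridPt N j) - τ (gridPt N i))

/-- The remainder operator `K_{1h}[f,τ]`. -/
def K1h (N : ℤ) (f τ : ℝ → ℂ) (q : ℤ → ℂ) (i : ℤ) : ℂ :=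
  ((hgrid N / Real.pi : ℝ) : ℂ) * ∑ j ∈ (idxs N).filter (fun j => Odd (j - i)),
    q j * (f (gridPt N j) / (τ (gridPt N j) - τ (gridPt N i)) -
      f (gridPt N i) / (2 * deriv τ (gridPt N i)) *
        (Real.cot ((gridPt N j - gridPt N i) / 2) : ℂ))

section RemainderKernel

open scoped ContDiff Topology

theorem hasFDerivAt_intervalIntegral_of_contDiff.{u} {H E : Type u} [NormedAddCommGroup H]
    [NormedSpace ℝ H] [ProperSpace H] [NormedAddCommGroup E] [NormedSpace ℝ E]
    {F : H × ℝ → E} (hF : ContDiff ℝ 1 F) (x : H) :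
    HasFDerivAt (fun x => ∫ s in (0 : ℝ)..1, F (x, s))
      (∫ s in (0 : ℝ)..1, (fderiv ℝ F (x, s)).comp (ContinuousLinearMap.inl ℝ H ℝ)) x := by
  have hcont : Continuous fun p : H × ℝ =>
      (fderiv ℝ F p).comp (ContinuousLinearMap.inl ℝ H ℝ) :=
    (hF.continuous_fderiv one_ne_zero).clm_comp continuous_const
  have hcompact : IsCompact (Metric.closedBall x 1 ×ˢ Set.Icc (0 : ℝ) 1) :=
    (isCompact_closedBall x 1).prod isCompact_Icc
  obtain ⟨C, hC⟩ := hcompact.exists_bound_of_continuousOn hcont.continuousOn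
  refine intervalIntegral.hasFDerivAt_integral_of_dominated_of_fderiv_le
    (F := fun x s => F (x, s))
    (F' := fun x s => (fderiv ℝ F (x, s)).comp (ContinuousLinearMap.inl ℝ H ℝ))
    (bound := fun _ => C) (Metric.ball_mem_nhds x one_pos) ?_ ?_ ?_ ?_ ?_ ?_
  · exact .of_forall fun y =>
      (hF.continuous.comp (Continuous.prodMk_right y)).aestronglyMeasurable
  · exact (hF.continuous.comp (Continuous.prodMk_right x)).intervalIntegrable _ _
  · exact (hcont.comp (Continuous.prodMk_right x)).aestronglyMeasurable
  · refine .of_forall fun s hs y hy => hC (y, s) ⟨Metric.ball_subset_closedBall hy, ?_⟩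
    rw [Set.uIoc_of_le zero_le_one] at hs
    exact Set.Ioc_subset_Icc_self hs
  · exact intervalIntegrable_const
  · refine .of_forall fun s _ y _ => ?_
    exact (hF.differentiable one_ne_zero (y, s)).hasFDerivAt.comp y
      (hasFDerivAt_prodMk_left y s)

theorem ContDiff.intervalIntegral_right.{u} {H E : Type u} [NormedAddCommGroup H] [NormedSpace ℝ H]
    [ProperSpace H] [NormedAddCommGroup E] [NormedSpace ℝ E] {F : H × ℝ → E}
    (hF : ContDiff ℝ ∞ F) : ContDiff ℝ ∞ fun x => ∫ s in (0 : ℝ)..1, F (x, s) := by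
  refine contDiff_infty.2 fun n => ?_
  induction n generalizing E with
  | zero =>
    exact contDiff_zero.2 (intervalIntegral.continuous_parametric_intervalIntegral_of_continuous'
      (f := fun x s => F (x, s)) hF.continuous 0 1)
  | succ n ih =>
    rw [Nat.cast_succ, contDiff_succ_iff_hasFDerivAt]
    exact ⟨_, ih ((hF.fderiv_right le_rfl).clm_comp contDiff_const),
      hasFDerivAt_intervalIntegral_of_contDiff (hF.of_le (by simp))⟩

/-- Hadamard's lemma: a smooth function vanishing on the diagonal is smoothly divisible by
`b - a`. -/
theorem exists_contDiff_eq_sub_mul {P : ℝ × ℝ → ℂ} (hP : ContDiff ℝ ∞ P)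
    (hdiag : ∀ a, P (a, a) = 0) :
    ∃ Q : ℝ × ℝ → ℂ, ContDiff ℝ ∞ Q ∧ ∀ a b, P (a, b) = ((b - a : ℝ) : ℂ) * Q (a, b) := by
  let F : (ℝ × ℝ) × ℝ → ℂ := fun p =>
    fderiv ℝ P (p.1.1, p.1.1 + p.2 * (p.1.2 - p.1.1)) (0, 1)
  have hF : ContDiff ℝ ∞ F :=
    ((hP.fderiv_right (m := ∞) le_rfl).comp (by fun_prop)).clm_apply contDiff_const
  refine ⟨_, hF.intervalIntegral_right, fun a b => ?_⟩
  have hderiv (s : ℝ) : HasDerivAt (fun s : ℝ => P (a, a + s * (b - a)))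
      (((b - a : ℝ) : ℂ) * F ((a, b), s)) s := by
    have hline : HasDerivAt (fun s : ℝ => (a, a + s * (b - a))) ((b - a) • ((0 : ℝ), (1 : ℝ))) s := by
      have := (hasDerivAt_const s a).prodMk (((hasDerivAt_id s).mul_const (b - a)).const_add a)
      simpa using this
    have := (hP.differentiable (by simp) (a, a + s * (b - a))).hasFDerivAt.comp_hasDerivAt s hline
    rw [map_smul, Complex.real_smul] at this
    exact this
  have hFc : Continuous fun s => F ((a, b), s) := hF.continuous.comp (Continuous.prodMk_right _)
  have := intervalIntegral.integral_eq_sub_of_hasDerivAt (fun s _ => hderiv s)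
    ((continuous_const.mul hFc).intervalIntegrable 0 1)
  rw [intervalIntegral.integral_const_mul] at this
  simp [hdiag] at this ⊢
  exact this.symm

theorem eq_deriv_of_eq_sub_mul {g t : ℝ → ℂ} {a : ℝ} (ht : ContinuousAt t a)
    (hg : ∀ b, g b - g a = ((b - a : ℝ) : ℂ) * t b) : t a = deriv g a := by
  refine (HasDerivAt.deriv (hasDerivAt_iff_tendsto_slope.2 ?_)).symm
  refine (ht.mono_left nhdsWithin_le_nhds).congr' ?_
  filter_upwards [self_mem_nhdsWithin] with b hb
  have hba : ((b - a : ℝ) : ℂ) ≠ 0 := by exact_mod_cast sub_ne_zero.2 hb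
  rw [slope_def_module, hg, Complex.real_smul, Complex.ofReal_inv, inv_mul_cancel_left₀ hba]

/-- The kernel of the remainder operator `K1h`. -/
def remainderKernel (f τ : ℝ → ℂ) (a b : ℝ) : ℂ :=
  f b / (τ b - τ a) - f a / (2 * deriv τ a) * (Real.cot ((b - a) / 2) : ℂ)

theorem ne_int_mul_two_pi {x : ℝ} (hx : x ≠ 0) (hlt : |x| < 2 * Real.pi) :
    ¬ ∃ n : ℤ, x = n * (2 * Real.pi) := by
  rintro ⟨n, rfl⟩
  have hn : n ≠ 0 := by rintro rfl; simp at hx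
  have h1 : (1 : ℝ) ≤ |(n : ℝ)| := by exact_mod_cast Int.one_le_abs hn
  rw [abs_mul, abs_of_pos Real.two_pi_pos] at hlt
  nlinarith [Real.pi_pos]

theorem sin_half_ne_zero {x : ℝ} (hx : x ≠ 0) (hlt : |x| < 2 * Real.pi) :
    Real.sin (x / 2) ≠ 0 := by
  intro h
  obtain ⟨n, hn⟩ := Real.sin_eq_zero_iff.1 h
  exact ne_int_mul_two_pi hx hlt ⟨n, by linarith⟩

theorem exists_contDiffOn_eq_remainderKernel {f τ : ℝ → ℂ} (hf : ContDiff ℝ ∞ f)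
    (hτ : ContDiff ℝ ∞ τ) (hτ' : ∀ α : ℝ, deriv τ α ≠ 0)
    (hinj : ∀ α β : ℝ, (¬ ∃ n : ℤ, α - β = n * (2 * Real.pi)) → τ α ≠ τ β) :
    ∃ G : ℝ × ℝ → ℂ, ContDiffOn ℝ ∞ G {p | |p.1 - p.2| < 2 * Real.pi} ∧
      ∀ a b, a ≠ b → |a - b| < 2 * Real.pi → remainderKernel f τ a b = G (a, b) := by
  have hdτ : ContDiff ℝ ∞ (deriv τ) := (contDiff_infty_iff_deriv.1 hτ).2
  obtain ⟨T, hT, hTeq⟩ := exists_contDiff_eq_sub_mul (P := fun p => τ p.2 - τ p.1)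
    ((hτ.comp contDiff_snd).sub (hτ.comp contDiff_fst)) (by simp)
  obtain ⟨S, hS, hSeq⟩ := exists_contDiff_eq_sub_mul
    (P := fun p => ((Real.sin ((p.2 - p.1) / 2) : ℝ) : ℂ))
    (Complex.ofRealCLM.contDiff.comp
      (Real.contDiff_sin.comp ((contDiff_snd.sub contDiff_fst).div_const 2))) (by simp)
  dsimp only at hTeq hSeq
  have hTdiag (a : ℝ) : T (a, a) = deriv τ a :=
    eq_deriv_of_eq_sub_mul (t := fun b => T (a, b))
      (hT.continuous.comp (Continuous.prodMk_right a)).continuousAt (hTeq a)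
  have hSdiag (a : ℝ) : S (a, a) = 1 / 2 := by
    rw [eq_deriv_of_eq_sub_mul (t := fun b => S (a, b))
      (g := fun b => ((Real.sin ((b - a) / 2) : ℝ) : ℂ))
      (hS.continuous.comp (Continuous.prodMk_right a)).continuousAt
      fun b => by simpa using hSeq a b]
    have : HasDerivAt (fun b : ℝ => Real.sin ((b - a) / 2)) (1 / 2) a := by
      simpa using (((hasDerivAt_id a).sub_const a).div_const 2).sin
    simpa using this.ofReal_comp.deriv
  obtain ⟨Q, hQ, hQeq⟩ := exists_contDiff_eq_sub_mul
    (P := fun p => f p.2 * (2 * deriv τ p.1) * S p -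
      f p.1 * T p * ((Real.cos ((p.2 - p.1) / 2) : ℝ) : ℂ))
    ((((hf.comp contDiff_snd).mul (contDiff_const.mul (hdτ.comp contDiff_fst))).mul hS).sub
      (((hf.comp contDiff_fst).mul hT).mul (Complex.ofRealCLM.contDiff.comp
        (Real.contDiff_cos.comp ((contDiff_snd.sub contDiff_fst).div_const 2)))))
    (fun a => by simp [hTdiag, hSdiag]; ring)
  dsimp only at hQeq
  have hTne {a b : ℝ} (h : |a - b| < 2 * Real.pi) : T (a, b) ≠ 0 := by
    rcases eq_or_ne a b with rfl | hab
    · rw [hTdiag]; exact hτ' a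
    · intro h0
      have := hTeq a b
      rw [h0, mul_zero, sub_eq_zero] at this
      exact hinj a b (ne_int_mul_two_pi (sub_ne_zero.2 hab) h) this.symm
  have hSne {a b : ℝ} (h : |a - b| < 2 * Real.pi) : S (a, b) ≠ 0 := by
    rcases eq_or_ne a b with rfl | hab
    · rw [hSdiag]; norm_num
    · intro h0
      have := hSeq a b
      rw [h0, mul_zero] at this
      exact sin_half_ne_zero (sub_ne_zero.2 hab.symm) (by rwa [abs_sub_comm]) (by exact_mod_cast this)
  refine ⟨fun p => Q p / (2 * deriv τ p.1 * T p * S p), ?_, fun a b hab h => ?_⟩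
  · simp only [div_eq_mul_inv]
    refine hQ.contDiffOn.mul (ContDiffOn.inv
      (((contDiff_const.mul (hdτ.comp contDiff_fst)).mul hT).mul hS).contDiffOn ?_)
    rintro ⟨a, b⟩ h
    exact mul_ne_zero (mul_ne_zero (mul_ne_zero two_ne_zero (hτ' a)) (hTne h)) (hSne h)
  · have hx : ((b - a : ℝ) : ℂ) ≠ 0 := by exact_mod_cast sub_ne_zero.2 hab.symm
    have h1 := hTne h
    have h2 := hSne h
    have h3 := hτ' a
    have h4 := hQeq a b
    rw [remainderKernel, Real.cot_eq_cos_div_sin, Complex.ofReal_div, hSeq, hTeq]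
    dsimp only
    rw [eq_div_iff (mul_ne_zero (mul_ne_zero (mul_ne_zero two_ne_zero h3) h1) h2)]
    field_simp
    linear_combination h4

/-- The partial derivative in the first variable. -/
def fstDeriv (G : ℝ × ℝ → ℂ) (p : ℝ × ℝ) : ℂ := fderiv ℝ G p (1, 0)

theorem ContDiffOn.fstDeriv {G : ℝ × ℝ → ℂ} {U : Set (ℝ × ℝ)} (hU : IsOpen U)
    (hG : ContDiffOn ℝ ∞ G U) : ContDiffOn ℝ ∞ (fstDeriv G) U :=
  (hG.fderiv_of_isOpen hU le_rfl).clm_apply contDiffOn_const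

theorem hasDerivAt_fstDeriv {G : ℝ × ℝ → ℂ} {U : Set (ℝ × ℝ)} (hU : IsOpen U)
    (hG : ContDiffOn ℝ ∞ G U) {a b : ℝ} (hp : (a, b) ∈ U) :
    HasDerivAt (fun x => G (x, b)) (fstDeriv G (a, b)) a :=
  ((hG.contDiffAt (hU.mem_nhds hp)).differentiableAt (by simp)).hasFDerivAt.comp_hasDerivAt a
    ((hasDerivAt_id a).prodMk (hasDerivAt_const a b))

theorem norm_add_sub_le_of_norm_hasDerivAt_le {g g' : ℝ → ℂ} {a t C : ℝ} (ht : 0 ≤ t)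
    (hg : ∀ x ∈ Set.Icc a (a + t), HasDerivAt g (g' x) x)
    (hC : ∀ x ∈ Set.Icc a (a + t), ‖g' x‖ ≤ C) : ‖g (a + t) - g a‖ ≤ C * t := by
  have := (convex_Icc a (a + t)).norm_image_sub_le_of_norm_hasDerivWithin_le
    (fun x hx => (hg x hx).hasDerivWithinAt) hC (Set.left_mem_Icc.2 (by linarith))
    (Set.right_mem_Icc.2 (by linarith))
  simpa [abs_of_nonneg ht] using this

theorem norm_second_difference_le {g g' g'' : ℝ → ℂ} {a t C : ℝ} (ht : 0 ≤ t)
    (hg : ∀ x ∈ Set.Icc a (a + 2 * t), HasDerivAt g (g' x) x)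
    (hg' : ∀ x ∈ Set.Icc a (a + 2 * t), HasDerivAt g' (g'' x) x)
    (hC : ∀ x ∈ Set.Icc a (a + 2 * t), ‖g'' x‖ ≤ C) :
    ‖g (a + 2 * t) - 2 * g (a + t) + g a‖ ≤ C * t ^ 2 := by
  have key := norm_add_sub_le_of_norm_hasDerivAt_le (g := fun x => g (x + t) - g x)
    (g' := fun x => g' (x + t) - g' x) (a := a) (C := C * t) ht
    (fun x hx => ((hg (x + t) ⟨by linarith [hx.1], by linarith [hx.2]⟩).comp_add_const x t).sub
      (hg x ⟨hx.1, by linarith [hx.2]⟩))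
    (fun x hx => norm_add_sub_le_of_norm_hasDerivAt_le ht
      (fun y hy => hg' y ⟨by linarith [hx.1, hy.1], by linarith [hx.2, hy.2]⟩)
      (fun y hy => hC y ⟨by linarith [hx.1, hy.1], by linarith [hx.2, hy.2]⟩))
  convert key using 1
  · congr 1
    rw [show a + t + t = a + 2 * t by ring]
    ring
  · ring

theorem exists_difference_bounds {G : ℝ × ℝ → ℂ}
    (hG : ContDiffOn ℝ ∞ G {p | |p.1 - p.2| < 2 * Real.pi}) :
    ∃ C : ℝ, 0 < C ∧ ∀ a b, b ∈ Set.Icc (-Real.pi) Real.pi → |a - b| ≤ 3 * Real.pi / 2 →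
      ‖G (a, b)‖ ≤ C ∧ ∀ t, 0 ≤ t →
        (|a + t - b| ≤ 3 * Real.pi / 2 → ‖G (a + t, b) - G (a, b)‖ ≤ C * t) ∧
        (|a + 2 * t - b| ≤ 3 * Real.pi / 2 →
          ‖G (a + 2 * t, b) - 2 * G (a + t, b) + G (a, b)‖ ≤ C * t ^ 2) := by
  have hU : IsOpen {p : ℝ × ℝ | |p.1 - p.2| < 2 * Real.pi} :=
    isOpen_lt (by fun_prop) continuous_const
  have hG₁ := hG.fstDeriv hU
  have hG₂ := hG₁.fstDeriv hU
  let K : Set (ℝ × ℝ) := {p | |p.1 - p.2| ≤ 3 * Real.pi / 2 ∧ p.2 ∈ Set.Icc (-Real.pi) Real.pi}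
  have hK : IsCompact K := by
    have hclosed : IsClosed K :=
      (isClosed_le (f := fun p : ℝ × ℝ => |p.1 - p.2|) (by fun_prop) continuous_const).inter
        (isClosed_Icc.preimage continuous_snd)
    refine (isCompact_Icc.prod isCompact_Icc : IsCompact
      (Set.Icc (-(3 * Real.pi)) (3 * Real.pi) ×ˢ Set.Icc (-Real.pi) Real.pi)).of_isClosed_subset
      hclosed ?_
    rintro ⟨x, y⟩ ⟨h1, h2⟩
    refine ⟨?_, h2⟩
    dsimp only at h1 h2
    rw [abs_le] at h1
    constructor <;> dsimp only <;> linarith [h1.1, h1.2, h2.1, h2.2, Real.pi_pos]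
  have hKU : K ⊆ {p | |p.1 - p.2| < 2 * Real.pi} := fun p hp =>
    hp.1.trans_lt (by linarith [Real.pi_pos])
  obtain ⟨C₀, hC₀⟩ := hK.exists_bound_of_continuousOn (hG.continuousOn.mono hKU)
  obtain ⟨C₁, hC₁⟩ := hK.exists_bound_of_continuousOn (hG₁.continuousOn.mono hKU)
  obtain ⟨C₂, hC₂⟩ := hK.exists_bound_of_continuousOn (hG₂.continuousOn.mono hKU)
  have hle₀ : C₀ ≤ max 1 (max C₀ (max C₁ C₂)) := by simp
  have hle₁ : C₁ ≤ max 1 (max C₀ (max C₁ C₂)) := by simp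
  have hle₂ : C₂ ≤ max 1 (max C₀ (max C₁ C₂)) := by simp
  refine ⟨max 1 (max C₀ (max C₁ C₂)), by positivity, fun a b hb hab =>
    ⟨(hC₀ (a, b) ⟨hab, hb⟩).trans hle₀, fun t ht => ⟨fun hat => ?_, fun hat => ?_⟩⟩⟩
  all_goals rw [abs_le] at hab hat
  · have hmem (x : ℝ) (hx : x ∈ Set.Icc a (a + t)) : (x, b) ∈ K :=
      ⟨abs_le.2 ⟨by linarith [hx.1], by linarith [hx.2]⟩, hb⟩
    exact norm_add_sub_le_of_norm_hasDerivAt_le (g := fun x => G (x, b)) ht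
      (fun x hx => hasDerivAt_fstDeriv hU hG (hKU (hmem x hx)))
      (fun x hx => (hC₁ _ (hmem x hx)).trans hle₁)
  · have hmem (x : ℝ) (hx : x ∈ Set.Icc a (a + 2 * t)) : (x, b) ∈ K :=
      ⟨abs_le.2 ⟨by linarith [hx.1], by linarith [hx.2]⟩, hb⟩
    exact norm_second_difference_le (g := fun x => G (x, b)) ht
      (fun x hx => hasDerivAt_fstDeriv hU hG (hKU (hmem x hx)))
      (fun x hx => hasDerivAt_fstDeriv hU hG₁ (hKU (hmem x hx)))
      (fun x hx => (hC₂ _ (hmem x hx)).trans hle₂)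

theorem remainderKernel_periodic {f τ : ℝ → ℂ} (hf : Function.Periodic f (2 * Real.pi))
    (hτ : Function.Periodic τ (2 * Real.pi)) (b : ℝ) :
    Function.Periodic (fun a => remainderKernel f τ a b) (2 * Real.pi) := by
  intro a
  have hd : deriv τ (a + 2 * Real.pi) = deriv τ a := by
    rw [← deriv_comp_add_const, funext hτ]
  have hcot : Real.cot ((b - (a + 2 * Real.pi)) / 2) = Real.cot ((b - a) / 2) := by
    rw [show (b - (a + 2 * Real.pi)) / 2 = (b - a) / 2 - Real.pi by ring,
      Real.cot_eq_cos_div_sin, Real.cot_eq_cos_div_sin, Real.cos_sub_pi, Real.sin_sub_pi,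
      neg_div_neg_eq]
  simp only [remainderKernel, hd, hcot, hf a, hτ a]

theorem exists_remainderKernel_bounds {f τ : ℝ → ℂ}
    (hfper : Function.Periodic f (2 * Real.pi)) (hτper : Function.Periodic τ (2 * Real.pi))
    (hf : ContDiff ℝ ∞ f) (hτ : ContDiff ℝ ∞ τ) (hτ' : ∀ α : ℝ, deriv τ α ≠ 0)
    (hinj : ∀ α β : ℝ, (¬ ∃ n : ℤ, α - β = n * (2 * Real.pi)) → τ α ≠ τ β) :
    ∃ C : ℝ, 0 < C ∧ ∀ a b t, b ∈ Set.Icc (-Real.pi) Real.pi → 0 ≤ t →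
      (∀ n : ℤ, a - b ≠ n * (2 * Real.pi)) → (∀ n : ℤ, a + t - b ≠ n * (2 * Real.pi)) →
      (∀ n : ℤ, a + 2 * t - b ≠ n * (2 * Real.pi)) →
      ‖remainderKernel f τ a b‖ ≤ C ∧
      ‖remainderKernel f τ (a + t) b - remainderKernel f τ a b‖ ≤ C * t ∧
      ‖remainderKernel f τ (a + 2 * t) b - 2 * remainderKernel f τ (a + t) b +
        remainderKernel f τ a b‖ ≤ C * t ^ 2 := by
  obtain ⟨G, hG, hGeq⟩ := exists_contDiffOn_eq_remainderKernel hf hτ hτ' hinj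
  obtain ⟨C, hC, hbound⟩ := exists_difference_bounds hG
  have hπ := Real.pi_gt_three
  have hper := remainderKernel_periodic hfper hτper
  -- every `a` has a translate by a period within distance `π` of `b`
  have hrep (a b : ℝ) : ∃ n : ℤ, |a + n * (2 * Real.pi) - b| ≤ Real.pi := by
    refine ⟨-round ((a - b) / (2 * Real.pi)), ?_⟩
    have h1 := abs_sub_round ((a - b) / (2 * Real.pi))
    have h2 : a + ((-round ((a - b) / (2 * Real.pi)) : ℤ) : ℝ) * (2 * Real.pi) - b =
        ((a - b) / (2 * Real.pi) - round ((a - b) / (2 * Real.pi))) * (2 * Real.pi) := by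
      push_cast
      field_simp
      ring
    rw [h2, abs_mul, abs_of_pos Real.two_pi_pos]
    nlinarith
  have hshift (a b : ℝ) (n : ℤ) :
      remainderKernel f τ (a + n * (2 * Real.pi)) b = remainderKernel f τ a b :=
    (hper b).int_mul n a
  have hkernel {a b : ℝ} (h0 : ∀ n : ℤ, a - b ≠ n * (2 * Real.pi)) (n : ℤ)
      (hn : |a + n * (2 * Real.pi) - b| ≤ 3 * Real.pi / 2) :
      remainderKernel f τ a b = G (a + n * (2 * Real.pi), b) := by
    rw [← hshift a b n]
    refine hGeq _ _ (fun h => h0 (-n) ?_) (hn.trans_lt (by linarith))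
    push_cast
    linarith
  have hsup {a b : ℝ} (hb : b ∈ Set.Icc (-Real.pi) Real.pi)
      (h0 : ∀ n : ℤ, a - b ≠ n * (2 * Real.pi)) : ‖remainderKernel f τ a b‖ ≤ C := by
    obtain ⟨n, hn⟩ := hrep a b
    rw [hkernel h0 n (by linarith)]
    exact (hbound _ b hb (by linarith)).1
  refine ⟨16 * C, by positivity, fun a b t hb ht h0 h1 h2 => ?_⟩
  have hs0 := hsup hb h0
  have hs1 := hsup hb h1
  have hs2 := hsup hb h2
  refine ⟨by linarith, ?_⟩
  rcases le_or_gt t (1 / 2) with ht' | ht'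
  · obtain ⟨n, hn⟩ := hrep a b
    have hn' := abs_le.1 hn
    have e1 : a + t + n * (2 * Real.pi) = a + n * (2 * Real.pi) + t := by ring
    have e2 : a + 2 * t + n * (2 * Real.pi) = a + n * (2 * Real.pi) + 2 * t := by ring
    have b1 : |a + n * (2 * Real.pi) + t - b| ≤ 3 * Real.pi / 2 :=
      abs_le.2 ⟨by linarith, by linarith⟩
    have b2 : |a + n * (2 * Real.pi) + 2 * t - b| ≤ 3 * Real.pi / 2 :=
      abs_le.2 ⟨by linarith, by linarith⟩
    have hb' := (hbound _ b hb (hn.trans (by linarith))).2 t ht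
    rw [hkernel h0 n (by linarith), hkernel h1 n (by rwa [e1]), hkernel h2 n (by rwa [e2]), e1, e2]
    have d1 := hb'.1 b1
    have d2 := hb'.2 b2
    constructor <;> nlinarith [mul_nonneg hC.le ht, mul_nonneg hC.le (sq_nonneg t)]
  · constructor
    · have := norm_sub_le (remainderKernel f τ (a + t) b) (remainderKernel f τ a b)
      nlinarith
    · have d1 := norm_add_le (remainderKernel f τ (a + 2 * t) b - 2 * remainderKernel f τ (a + t) b)
        (remainderKernel f τ a b)
      have d2 := norm_sub_le (remainderKernel f τ (a + 2 * t) b) (2 * remainderKernel f τ (a + t) b)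
      rw [norm_mul, Complex.norm_two] at d2
      have : (1 / 4 : ℝ) ≤ t ^ 2 := by nlinarith
      nlinarith

theorem hgrid_pos {N : ℤ} (hN : 2 ≤ N) : 0 < hgrid N := by
  have : (0 : ℝ) < N := by exact_mod_cast (by omega : (0 : ℤ) < N)
  exact div_pos Real.two_pi_pos this

theorem mul_hgrid {N : ℤ} (hN : 2 ≤ N) : (N : ℝ) * hgrid N = 2 * Real.pi := by
  have : (N : ℝ) ≠ 0 := by exact_mod_cast (by omega : N ≠ 0)
  rw [hgrid]
  field_simp

theorem gridPt_add (N i j : ℤ) : gridPt N (i + j) = gridPt N i + gridPt N j := by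
  simp only [gridPt]
  push_cast
  ring

theorem gridPt_self {N : ℤ} (hN : 2 ≤ N) : gridPt N N = 2 * Real.pi := mul_hgrid hN

theorem abs_gridPt_le {N k : ℤ} (hN : 2 ≤ N) (hk : k ∈ idxs N) : |gridPt N k| ≤ Real.pi := by
  have hk' := Finset.mem_Icc.1 hk
  have hle : |2 * k| ≤ N := abs_le.2 ⟨by omega, by omega⟩
  have hle' : |(2 * k : ℝ)| ≤ N := by exact_mod_cast hle
  have := mul_le_mul_of_nonneg_right hle' (hgrid_pos hN).le
  rw [mul_hgrid hN, abs_mul, abs_two] at this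
  rw [gridPt, abs_mul, abs_of_pos (hgrid_pos hN)]
  linarith

theorem card_idxs {N : ℤ} (hN : 0 ≤ N) (hev : Even N) : ((idxs N).card : ℤ) = N := by
  obtain ⟨m, rfl⟩ := hev
  rw [idxs, Int.card_Icc]
  omega

theorem abs_sub_lt_of_mem_idxs {N k l : ℤ} (hk : k ∈ idxs N) (hl : l ∈ idxs N) :
    |k - l| < N := by
  have hk' := Finset.mem_Icc.1 hk
  have hl' := Finset.mem_Icc.1 hl
  rw [abs_lt]
  omega

theorem sum_idxs_add_one {N : ℤ} (hN : 2 ≤ N) (hev : Even N) {g : ℤ → ℂ}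
    (hg : Function.Periodic g N) : ∑ j ∈ idxs N, g (j + 1) = ∑ j ∈ idxs N, g j := by
  obtain ⟨m, rfl⟩ := hev
  have hm : (m + m) / 2 = m := by omega
  have h1 : Finset.Icc (-m + 1 + 1) (m + 1) = insert (m + 1) (Finset.Icc (-m + 1 + 1) m) := by
    ext x; simp; omega
  have h2 : Finset.Icc (-m + 1) m = insert (-m + 1) (Finset.Icc (-m + 1 + 1) m) := by
    ext x; simp; omega
  have hshift : ∑ j ∈ Finset.Icc (-m + 1) m, g (j + 1) =
      ∑ j ∈ Finset.Icc (-m + 1 + 1) (m + 1), g j := by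
    rw [← Finset.map_add_right_Icc, Finset.sum_map]
    rfl
  rw [idxs, hm, hshift, h1, Finset.sum_insert (by simp), h2,
    Finset.sum_insert (by simp only [Finset.mem_Icc]; omega), ← hg (-m + 1)]
  congr 2
  ring

theorem exp_gridPt_periodic {N : ℤ} (hN : 2 ≤ N) (k : ℤ) :
    Function.Periodic (fun j => Complex.exp (Complex.I * (k : ℂ) * (gridPt N j : ℂ))) N := by
  intro j
  dsimp only
  rw [gridPt_add, gridPt_self hN]
  push_cast
  rw [show Complex.I * (k : ℂ) * (gridPt N j + 2 * Real.pi) =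
    Complex.I * k * gridPt N j + k * (2 * Real.pi * Complex.I) by ring, Complex.exp_add,
    Complex.exp_int_mul_two_pi_mul_I, mul_one]

theorem sum_exp_gridPt {N : ℤ} (hN : 2 ≤ N) (hev : Even N) {m : ℤ} (hm : |m| < N) :
    ∑ j ∈ idxs N, Complex.exp (Complex.I * (m : ℂ) * (gridPt N j : ℂ)) =
      if m = 0 then (N : ℂ) else 0 := by
  split_ifs with h0
  · subst h0
    simpa using congrArg (Int.cast : ℤ → ℂ) (card_idxs (by omega) hev)
  · have hshift := sum_idxs_add_one hN hev (exp_gridPt_periodic hN m)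
    have hmul (j : ℤ) : Complex.exp (Complex.I * (m : ℂ) * (gridPt N (j + 1) : ℂ)) =
        Complex.exp (Complex.I * m * hgrid N) *
          Complex.exp (Complex.I * (m : ℂ) * (gridPt N j : ℂ)) := by
      rw [← Complex.exp_add, gridPt_add]
      congr 1
      simp only [gridPt]
      push_cast
      ring
    simp only [hmul, ← Finset.mul_sum] at hshift
    rcases mul_left_eq_self₀.1 hshift with h | h
    · exfalso
      obtain ⟨n, hn⟩ := Complex.exp_eq_one_iff.1 h
      have hn' : (m : ℂ) * hgrid N = n * (2 * Real.pi) :=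
        mul_left_cancel₀ Complex.I_ne_zero (by linear_combination hn)
      have hn'' : (m : ℝ) * hgrid N = n * (2 * Real.pi) := by exact_mod_cast hn'
      rw [← mul_hgrid hN, ← mul_assoc] at hn''
      have : m = n * N := by exact_mod_cast mul_right_cancel₀ (hgrid_pos hN).ne' hn''
      have hdvd : N ∣ m := ⟨n, by rw [this, mul_comm]⟩
      exact h0 (Int.eq_zero_of_abs_lt_dvd hdvd hm)
    · exact h

theorem sum_exp_mul_exp_neg {N : ℤ} (hN : 2 ≤ N) (hev : Even N) {k l : ℤ} (hk : k ∈ idxs N)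
    (hl : l ∈ idxs N) :
    ∑ j ∈ idxs N, Complex.exp (Complex.I * (k : ℂ) * (gridPt N j : ℂ)) *
      Complex.exp (-(Complex.I * (l : ℂ) * (gridPt N j : ℂ))) = if k = l then (N : ℂ) else 0 := by
  have := sum_exp_gridPt hN hev (abs_sub_lt_of_mem_idxs hk hl)
  simp only [sub_eq_zero] at this
  rw [← this]
  refine Finset.sum_congr rfl fun j _ => ?_
  rw [← Complex.exp_add]
  push_cast
  ring_nf

theorem dft_idft {N : ℤ} (hN : 2 ≤ N) (hev : Even N) (c : ℤ → ℂ) {k : ℤ} (hk : k ∈ idxs N) :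
    dft N (idft N c) k = c k := by
  have hN0 : (N : ℂ) ≠ 0 := by exact_mod_cast (by omega : N ≠ 0)
  simp only [dft, idft, Finset.sum_mul, mul_assoc (c _)]
  rw [Finset.sum_comm]
  simp only [← Finset.mul_sum]
  rw [Finset.sum_congr rfl fun l hl => by rw [sum_exp_mul_exp_neg hN hev hl hk]]
  simp [hk, hN0, mul_comm]

theorem idft_dft {N : ℤ} (hN : 2 ≤ N) (hev : Even N) (f : ℤ → ℂ) {j : ℤ} (hj : j ∈ idxs N) :
    idft N (dft N f) j = f j := by
  have hN0 : (N : ℂ) ≠ 0 := by exact_mod_cast (by omega : N ≠ 0)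
  have hsymm (k l : ℤ) : (k : ℂ) * (gridPt N l : ℂ) = l * (gridPt N k : ℂ) := by
    simp only [gridPt]
    push_cast
    ring
  simp only [dft, idft, mul_assoc, Finset.sum_mul, ← Finset.mul_sum]
  rw [Finset.sum_comm]
  have hinner (l : ℤ) (hl : l ∈ idxs N) : ∑ k ∈ idxs N,
      f l * (Complex.exp (-(Complex.I * ((k : ℂ) * (gridPt N l : ℂ)))) *
        Complex.exp (Complex.I * ((k : ℂ) * (gridPt N j : ℂ)))) =
      f l * if j = l then (N : ℂ) else 0 := by
    rw [← Finset.mul_sum, ← sum_exp_mul_exp_neg hN hev hj hl]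
    refine congrArg _ (Finset.sum_congr rfl fun k _ => ?_)
    rw [hsymm k l, hsymm k j, mul_comm, mul_assoc, mul_assoc]
  rw [Finset.sum_congr rfl hinner]
  simp [hj, hN0, mul_comm]

theorem l2norm_idft {N : ℤ} (hN : 2 ≤ N) (hev : Even N) (c : ℤ → ℂ) :
    l2norm N (idft N c) = Real.sqrt (2 * Real.pi * ∑ k ∈ idxs N, ‖c k‖ ^ 2) := by
  have hparseval : ∑ j ∈ idxs N, ‖idft N c j‖ ^ 2 = N * ∑ k ∈ idxs N, ‖c k‖ ^ 2 := by
    have hcast : ((∑ j ∈ idxs N, ‖idft N c j‖ ^ 2 : ℝ) : ℂ) =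
        ((N * ∑ k ∈ idxs N, ‖c k‖ ^ 2 : ℝ) : ℂ) := by
      have hconj (j : ℤ) : (starRingEnd ℂ) (idft N c j) = ∑ l ∈ idxs N, (starRingEnd ℂ) (c l) *
          Complex.exp (-(Complex.I * (l : ℂ) * (gridPt N j : ℂ))) := by
        simp [idft, map_sum, ← Complex.exp_conj]
      have hterm (j : ℤ) : ((‖idft N c j‖ ^ 2 : ℝ) : ℂ) = ∑ l ∈ idxs N, (starRingEnd ℂ) (c l) *
          (idft N c j * Complex.exp (-(Complex.I * (l : ℂ) * (gridPt N j : ℂ)))) := by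
        rw [Complex.ofReal_pow, ← Complex.mul_conj', hconj, Finset.mul_sum]
        exact Finset.sum_congr rfl fun l _ => by ring
      have hN0 : (N : ℂ) ≠ 0 := by exact_mod_cast (by omega : N ≠ 0)
      push_cast
      simp only [← Complex.ofReal_pow, hterm]
      rw [Finset.sum_comm, Finset.mul_sum]
      refine Finset.sum_congr rfl fun l hl => ?_
      have := dft_idft hN hev c hl
      rw [dft, inv_mul_eq_iff_eq_mul₀ hN0] at this
      rw [← Finset.mul_sum, this, Complex.ofReal_pow, ← Complex.mul_conj']
      ring
    exact_mod_cast hcast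
  rw [l2norm, hparseval, ← mul_hgrid hN]
  congr 1
  ring

/-- Discrete Parseval identity. -/
theorem l2norm_eq {N : ℤ} (hN : 2 ≤ N) (hev : Even N) (f : ℤ → ℂ) :
    l2norm N f = Real.sqrt (2 * Real.pi * ∑ k ∈ idxs N, ‖dft N f k‖ ^ 2) := by
  rw [← l2norm_idft hN hev, l2norm, l2norm]
  congr 2
  exact Finset.sum_congr rfl fun j hj => by rw [idft_dft hN hev f hj]

theorem l2norm_idft_le {N : ℤ} (hN : 2 ≤ N) (hev : Even N) {c g : ℤ → ℂ} {B : ℝ} (hB : 0 ≤ B)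
    (h : ∀ k ∈ idxs N, ‖c k‖ ≤ B * ‖dft N g k‖) : l2norm N (idft N c) ≤ B * l2norm N g := by
  rw [l2norm_idft hN hev, l2norm_eq hN hev]
  refine Real.sqrt_le_iff.2 ⟨by positivity, ?_⟩
  rw [mul_pow, Real.sq_sqrt (by positivity), mul_left_comm, Finset.mul_sum _ _ (B ^ 2)]
  gcongr with k hk
  rw [← mul_pow]
  exact pow_le_pow_left₀ (norm_nonneg _) (h k hk) 2

theorem dft_comp_add_one {N : ℤ} (hN : 2 ≤ N) (hev : Even N) {g : ℤ → ℂ}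
    (hg : Function.Periodic g N) (k : ℤ) :
    dft N (fun i => g (i + 1)) k = Complex.exp (Complex.I * gridPt N k) * dft N g k := by
  have hper : Function.Periodic
      (fun j => g j * Complex.exp (-(Complex.I * (k : ℂ) * (gridPt N j : ℂ)))) N := by
    intro j
    have := exp_gridPt_periodic hN (-k) j
    simp only [Int.cast_neg, mul_neg, neg_mul] at this
    simp only [hg j, this]
  rw [dft, dft, ← sum_idxs_add_one hN hev hper, mul_left_comm,
    Finset.mul_sum _ _ (Complex.exp _)]
  refine congrArg _ (Finset.sum_congr rfl fun j _ => ?_)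
  rw [mul_left_comm, ← Complex.exp_add]
  congr 2
  rw [gridPt_add]
  simp only [gridPt]
  push_cast
  ring

theorem dft_sub (N : ℤ) (f g : ℤ → ℂ) (k : ℤ) :
    dft N (fun i => f i - g i) k = dft N f k - dft N g k := by
  simp only [dft, sub_mul, Finset.sum_sub_distrib, mul_sub]

/-- The two-step forward difference, which preserves the parity of the index. -/
def stepTwoDiff (g : ℤ → ℂ) (i : ℤ) : ℂ := g (i + 2) - g i

theorem stepTwoDiff_periodic {N : ℤ} {g : ℤ → ℂ} (hg : Function.Periodic g N) :
    Function.Periodic (stepTwoDiff g) N := by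
  intro i
  rw [stepTwoDiff, stepTwoDiff, hg i, add_right_comm, hg]

theorem dft_stepTwoDiff {N : ℤ} (hN : 2 ≤ N) (hev : Even N) {g : ℤ → ℂ}
    (hg : Function.Periodic g N) (k : ℤ) :
    dft N (stepTwoDiff g) k =
      (Complex.exp (Complex.I * ((2 * gridPt N k : ℝ) : ℂ)) - 1) * dft N g k := by
  have hg1 : Function.Periodic (fun i => g (i + 1)) N := fun i => by
    dsimp only; rw [add_right_comm, hg]
  have htwo : (fun i => g (i + 2)) = fun i => (fun i => g (i + 1)) (i + 1) := by
    funext i; dsimp only; rw [add_assoc]; rfl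
  have hexp : Complex.exp (Complex.I * ((2 * gridPt N k : ℝ) : ℂ)) =
      Complex.exp (Complex.I * gridPt N k) * Complex.exp (Complex.I * gridPt N k) := by
    rw [← Complex.exp_add]; push_cast; ring_nf
  unfold stepTwoDiff
  rw [dft_sub, htwo, dft_comp_add_one hN hev hg1, dft_comp_add_one hN hev hg, hexp]
  ring

theorem IsFilter.exists_bound {ρ : ℝ → ℝ} (hρ : IsFilter ρ) :
    ∃ M : ℝ, 0 < M ∧ ∀ x, |x| ≤ Real.pi → ρ x ≤ M := by
  obtain ⟨r, _, hsmooth⟩ := hρ.smooth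
  obtain ⟨C, hC⟩ := (isCompact_Icc (a := -Real.pi) (b := Real.pi)).exists_bound_of_continuousOn
    hsmooth.continuous.continuousOn
  exact ⟨max C 1, by positivity, fun x hx =>
    ((le_abs_self _).trans (hC x (abs_le.1 hx))).trans (le_max_left _ _)⟩

/-- Since `ρ` vanishes at `±π`, the symbol `x ρ(x)` of the filtered derivative is dominated by
`sin x`, the symbol of the centred difference. -/
theorem IsFilter.exists_mul_le_sin {ρ : ℝ → ℝ} (hρ : IsFilter ρ) :
    ∃ B : ℝ, 0 < B ∧ ∀ x, |x| ≤ Real.pi → |x| * ρ x ≤ B * |Real.sin x| := by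
  obtain ⟨M, hM, hbound⟩ := hρ.exists_bound
  obtain ⟨r, hr, hsmooth⟩ := hρ.smooth
  have hdiff : ContDiff ℝ 1 ρ := hsmooth.of_le (by exact_mod_cast (by omega : 1 ≤ r))
  obtain ⟨L, hL⟩ := (isCompact_Icc (a := (0 : ℝ)) (b := Real.pi)).exists_bound_of_continuousOn
    (hdiff.continuous_deriv le_rfl).continuousOn
  have hπ := Real.pi_pos
  have hL0 : 0 ≤ L := (norm_nonneg _).trans (hL 0 ⟨le_rfl, hπ.le⟩)
  have hpos (x : ℝ) (hx0 : 0 ≤ x) (hxπ : x ≤ Real.pi) :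
      x * ρ x ≤ (Real.pi / 2 * M + Real.pi * (Real.pi / 2 * L)) * Real.sin x := by
    have hρM := hbound x (by rwa [abs_of_nonneg hx0])
    have hρ0 := hρ.nonneg x
    have hsin := Real.sin_nonneg_of_nonneg_of_le_pi hx0 hxπ
    have hnn1 : 0 ≤ Real.pi / 2 * M * Real.sin x := by positivity
    have hnn2 : 0 ≤ Real.pi * (Real.pi / 2 * L) * Real.sin x := by positivity
    rcases le_total x (Real.pi / 2) with hx | hx
    · have h1 : x ≤ Real.pi / 2 * Real.sin x := by
        have := mul_le_mul_of_nonneg_left (Real.mul_le_sin hx0 hx) (by positivity : 0 ≤ Real.pi / 2)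
        field_simp at this ⊢
        linarith
      nlinarith [mul_le_mul h1 hρM hρ0 (by positivity)]
    · have h1 : Real.pi - x ≤ Real.pi / 2 * Real.sin x := by
        have := mul_le_mul_of_nonneg_left
          (Real.mul_le_sin (by linarith : 0 ≤ Real.pi - x) (by linarith))
          (by positivity : 0 ≤ Real.pi / 2)
        rw [Real.sin_pi_sub] at this
        field_simp at this ⊢
        linarith
      have h2 : ρ x ≤ L * (Real.pi - x) := by
        have := (convex_Icc (0 : ℝ) Real.pi).norm_image_sub_le_of_norm_deriv_le
          (fun y _ => hdiff.differentiable one_ne_zero y) hL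
          (⟨hπ.le, le_rfl⟩ : Real.pi ∈ Set.Icc 0 Real.pi) (⟨hx0, hxπ⟩ : x ∈ Set.Icc 0 Real.pi)
        rw [hρ.zero_at_pi, sub_zero, Real.norm_of_nonneg hρ0, norm_sub_rev,
          Real.norm_of_nonneg (sub_nonneg.2 hxπ)] at this
        exact this
      have h3 := h2.trans (mul_le_mul_of_nonneg_left h1 hL0)
      nlinarith [mul_le_mul hxπ h3 hρ0 hπ.le]
  refine ⟨Real.pi / 2 * M + Real.pi * (Real.pi / 2 * L), by positivity, fun x hx => ?_⟩
  have habs : ρ |x| = ρ x := by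
    rcases abs_choice x with h | h <;> rw [h]
    exact hρ.even x
  have := hpos |x| (abs_nonneg x) hx
  rw [habs] at this
  refine this.trans (mul_le_mul_of_nonneg_left ?_ (by positivity))
  rcases abs_choice x with h | h <;> rw [h]
  · exact le_abs_self _
  · rw [Real.sin_neg]
    exact neg_le_abs _

theorem norm_filtered_symbol_le {N : ℤ} (hN : 2 ≤ N) {ρ : ℝ → ℝ} (hρ : IsFilter ρ) {B : ℝ}
    (hB : ∀ x, |x| ≤ Real.pi → |x| * ρ x ≤ B * |Real.sin x|) {k : ℤ} (hk : k ∈ idxs N) :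
    ‖Complex.I * (k : ℂ) * (ρ (gridPt N k) : ℂ)‖ ≤
      B / hgrid N * ‖Complex.exp (Complex.I * ((2 * gridPt N k : ℝ) : ℂ)) - 1‖ := by
  have hh := hgrid_pos hN
  have hbound := hB _ (abs_gridPt_le hN hk)
  have hx : |gridPt N k| = |(k : ℝ)| * hgrid N := by rw [gridPt, abs_mul, abs_of_pos hh]
  have h0 := hρ.nonneg (gridPt N k)
  have hpos : 0 ≤ |gridPt N k| * ρ (gridPt N k) := by positivity
  rw [Complex.norm_exp_I_mul_ofReal_sub_one, mul_div_cancel_left₀ _ (two_ne_zero' ℝ), norm_mul,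
    norm_mul, Complex.norm_I, one_mul, Complex.norm_intCast, Complex.norm_real,
    Real.norm_of_nonneg h0, norm_mul, Real.norm_ofNat, Real.norm_eq_abs, div_mul_eq_mul_div,
    le_div_iff₀ hh]
  rw [hx] at hbound hpos
  nlinarith

theorem l2norm_filterP_le {N : ℤ} (hN : 2 ≤ N) (hev : Even N) {ρ : ℝ → ℝ} (hρ : IsFilter ρ)
    {M : ℝ} (hM : 0 ≤ M) (hbound : ∀ x, |x| ≤ Real.pi → ρ x ≤ M) (φ : ℤ → ℂ) :
    l2norm N (filterP N ρ φ) ≤ M * l2norm N φ := by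
  refine l2norm_idft_le hN hev hM fun k hk => ?_
  rw [norm_mul, Complex.norm_real, Real.norm_of_nonneg (hρ.nonneg _)]
  exact mul_le_mul_of_nonneg_right (hbound _ (abs_gridPt_le hN hk)) (norm_nonneg _)

theorem l2norm_Dh_le {N : ℤ} (hN : 2 ≤ N) (hev : Even N) {ρ : ℝ → ℝ} (hρ : IsFilter ρ) {B : ℝ}
    (hB0 : 0 ≤ B) (hB : ∀ x, |x| ≤ Real.pi → |x| * ρ x ≤ B * |Real.sin x|) {g : ℤ → ℂ}
    (hg : Function.Periodic g N) :
    l2norm N (Dh N ρ g) ≤ B / hgrid N * l2norm N (stepTwoDiff g) := by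
  refine l2norm_idft_le hN hev (div_nonneg hB0 (hgrid_pos hN).le) fun k hk => ?_
  rw [dft_stepTwoDiff hN hev hg, norm_mul, norm_mul _ (dft N g k), ← mul_assoc]
  exact mul_le_mul_of_nonneg_right (norm_filtered_symbol_le hN hρ hB hk) (norm_nonneg _)

theorem l2norm_Dh_Dh_le {N : ℤ} (hN : 2 ≤ N) (hev : Even N) {ρ : ℝ → ℝ} (hρ : IsFilter ρ) {B : ℝ}
    (hB : ∀ x, |x| ≤ Real.pi → |x| * ρ x ≤ B * |Real.sin x|) {g : ℤ → ℂ}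
    (hg : Function.Periodic g N) :
    l2norm N (Dh N ρ (Dh N ρ g)) ≤
      (B / hgrid N) ^ 2 * l2norm N (stepTwoDiff (stepTwoDiff g)) := by
  refine l2norm_idft_le hN hev (sq_nonneg _) fun k hk => ?_
  have hsymbol := norm_filtered_symbol_le hN hρ hB hk
  rw [dft_stepTwoDiff hN hev (stepTwoDiff_periodic hg), dft_stepTwoDiff hN hev hg,
    show dft N (Dh N ρ g) k = _ from dft_idft hN hev _ hk, norm_mul, norm_mul _ (dft N g k),
    norm_mul _ (_ * dft N g k), norm_mul _ (dft N g k)]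
  have := mul_le_mul_of_nonneg_right
    (mul_le_mul hsymbol hsymbol (norm_nonneg _) ((norm_nonneg _).trans hsymbol))
    (norm_nonneg (dft N g k))
  linarith

theorem l2norm_le_of_norm_le {N : ℤ} (hN : 2 ≤ N) (hev : Even N) {u q : ℤ → ℂ} {D : ℝ}
    (hD : 0 ≤ D) (hu : ∀ i, ‖u i‖ ≤ D * (hgrid N * ∑ j ∈ idxs N, ‖q j‖)) :
    l2norm N u ≤ 2 * Real.pi * D * l2norm N q := by
  have hh := hgrid_pos hN
  have hcard : ((idxs N).card : ℝ) = N := by exact_mod_cast card_idxs (by omega) hev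
  have hNh := mul_hgrid hN
  set s : ℝ := ∑ j ∈ idxs N, ‖q j‖
  set Q : ℝ := ∑ j ∈ idxs N, ‖q j‖ ^ 2
  have hQ : 0 ≤ Q := by positivity
  have hcs : s ^ 2 ≤ N * Q := by rw [← hcard]; exact sq_sum_le_card_mul_sum_sq
  have hsum : ∑ j ∈ idxs N, ‖u j‖ ^ 2 ≤ N * (D * (hgrid N * s)) ^ 2 := by
    rw [← hcard, ← nsmul_eq_mul]
    exact Finset.sum_le_card_nsmul _ _ _ fun j _ =>
      pow_le_pow_left₀ (norm_nonneg _) (hu j) 2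
  refine Real.sqrt_le_iff.2 ⟨mul_nonneg (by positivity) (Real.sqrt_nonneg _), ?_⟩
  rw [l2norm, mul_pow _ (Real.sqrt _), Real.sq_sqrt (by positivity)]
  calc hgrid N * ∑ j ∈ idxs N, ‖u j‖ ^ 2
      ≤ hgrid N * (N * (D * (hgrid N * s)) ^ 2) := by gcongr
    _ = 2 * Real.pi * D ^ 2 * hgrid N ^ 2 * s ^ 2 := by rw [← hNh]; ring
    _ ≤ 2 * Real.pi * D ^ 2 * hgrid N ^ 2 * (N * Q) := by gcongr
    _ = (2 * Real.pi * D) ^ 2 * (hgrid N * Q) := by rw [← hNh]; ring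

theorem odd_sub_add_iff {N : ℤ} (hev : Even N) (i j : ℤ) : Odd (j - (i + N)) ↔ Odd (j - i) := by
  obtain ⟨m, rfl⟩ := hev
  simp only [Int.odd_iff]
  omega

theorem K1h_eq (N : ℤ) (f τ : ℝ → ℂ) (q : ℤ → ℂ) (i : ℤ) :
    K1h N f τ q i = ((hgrid N / Real.pi : ℝ) : ℂ) *
      ∑ j ∈ (idxs N).filter (fun j => Odd (j - i)),
        q j * remainderKernel f τ (gridPt N i) (gridPt N j) := rfl

theorem K1h_periodic {N : ℤ} (hN : 2 ≤ N) (hev : Even N) {f τ : ℝ → ℂ}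
    (hf : Function.Periodic f (2 * Real.pi)) (hτ : Function.Periodic τ (2 * Real.pi))
    (q : ℤ → ℂ) : Function.Periodic (K1h N f τ q) N := by
  intro i
  simp only [K1h_eq, odd_sub_add_iff hev, gridPt_add, gridPt_self hN,
    fun b => remainderKernel_periodic hf hτ b (gridPt N i)]

theorem norm_odd_sum_le {N : ℤ} (hN : 2 ≤ N) {q w : ℤ → ℂ} {D : ℝ} (i : ℤ)
    (hw : ∀ j ∈ idxs N, Odd (j - i) → ‖w j‖ ≤ D) :
    ‖((hgrid N / Real.pi : ℝ) : ℂ) * ∑ j ∈ (idxs N).filter (fun j => Odd (j - i)), q j * w j‖ ≤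
      D / Real.pi * (hgrid N * ∑ j ∈ (idxs N).filter (fun j => Odd (j - i)), ‖q j‖) := by
  have hh := hgrid_pos hN
  rw [norm_mul, Complex.norm_real, Real.norm_of_nonneg (by positivity)]
  have hsum : ‖∑ j ∈ (idxs N).filter (fun j => Odd (j - i)), q j * w j‖ ≤
      ∑ j ∈ (idxs N).filter (fun j => Odd (j - i)), ‖q j‖ * D := by
    refine (norm_sum_le _ _).trans (Finset.sum_le_sum fun j hj => ?_)
    rw [Finset.mem_filter] at hj
    rw [norm_mul]
    exact mul_le_mul_of_nonneg_left (hw j hj.1 hj.2) (norm_nonneg _)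
  rw [← Finset.sum_mul] at hsum
  refine (mul_le_mul_of_nonneg_left hsum (by positivity)).trans_eq ?_
  ring

theorem l2norm_odd_sum_le {N : ℤ} (hN : 2 ≤ N) (hev : Even N) {u q : ℤ → ℂ} {w : ℤ → ℤ → ℂ} {D : ℝ}
    (hD : 0 ≤ D) (hu : ∀ i, u i = ((hgrid N / Real.pi : ℝ) : ℂ) *
      ∑ j ∈ (idxs N).filter (fun j => Odd (j - i)), q j * w i j)
    (hw : ∀ i, ∀ j ∈ idxs N, Odd (j - i) → ‖w i j‖ ≤ D) :
    l2norm N u ≤ 2 * D * l2norm N q := by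
  have hh := hgrid_pos hN
  have hπ := Real.pi_pos
  have := l2norm_le_of_norm_le hN hev (u := u) (q := q) (D := D / Real.pi) (by positivity)
    fun i => by
      rw [hu]
      refine (norm_odd_sum_le hN i (hw i)).trans ?_
      gcongr
      exact Finset.filter_subset _ _
  rwa [mul_div_assoc', mul_right_comm 2 Real.pi D, mul_div_cancel_right₀ _ hπ.ne'] at this

theorem gridPt_sub_ne {N : ℤ} (hN : 2 ≤ N) (hev : Even N) {i j : ℤ} (hodd : Odd (j - i)) (n : ℤ) :
    gridPt N i - gridPt N j ≠ n * (2 * Real.pi) := by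
  intro h
  rw [← mul_hgrid hN, gridPt, gridPt, ← sub_mul, ← mul_assoc] at h
  have h' : i - j = n * N := by exact_mod_cast mul_right_cancel₀ (hgrid_pos hN).ne' h
  have : Even (i - j) := h' ▸ hev.mul_left n
  rw [← neg_sub, odd_neg] at hodd
  exact Int.not_odd_iff_even.2 this hodd

theorem stepTwoDiff_K1h (N : ℤ) (f τ : ℝ → ℂ) (q : ℤ → ℂ) (i : ℤ) :
    stepTwoDiff (K1h N f τ q) i = ((hgrid N / Real.pi : ℝ) : ℂ) *
      ∑ j ∈ (idxs N).filter (fun j => Odd (j - i)),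
        q j * (remainderKernel f τ (gridPt N (i + 2)) (gridPt N j) -
          remainderKernel f τ (gridPt N i) (gridPt N j)) := by
  simp only [stepTwoDiff, K1h_eq, odd_sub_add_iff even_two, ← mul_sub, ← Finset.sum_sub_distrib]

theorem stepTwoDiff_stepTwoDiff_K1h (N : ℤ) (f τ : ℝ → ℂ) (q : ℤ → ℂ) (i : ℤ) :
    stepTwoDiff (stepTwoDiff (K1h N f τ q)) i = ((hgrid N / Real.pi : ℝ) : ℂ) *
      ∑ j ∈ (idxs N).filter (fun j => Odd (j - i)),
        q j * (remainderKernel f τ (gridPt N (i + 2 + 2)) (gridPt N j) -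
          2 * remainderKernel f τ (gridPt N (i + 2)) (gridPt N j) +
          remainderKernel f τ (gridPt N i) (gridPt N j)) := by
  rw [stepTwoDiff]
  simp only [stepTwoDiff_K1h, odd_sub_add_iff even_two, ← mul_sub, ← Finset.sum_sub_distrib]
  congr 1
  exact Finset.sum_congr rfl fun j _ => by ring

theorem exists_l2norm_K1h_bounds {f τ : ℝ → ℂ}
    (hfper : Function.Periodic f (2 * Real.pi)) (hτper : Function.Periodic τ (2 * Real.pi))
    (hf : ContDiff ℝ ∞ f) (hτ : ContDiff ℝ ∞ τ) (hτ' : ∀ α : ℝ, deriv τ α ≠ 0)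
    (hinj : ∀ α β : ℝ, (¬ ∃ n : ℤ, α - β = n * (2 * Real.pi)) → τ α ≠ τ β) :
    ∃ C : ℝ, 0 < C ∧ ∀ N : ℤ, 2 ≤ N → Even N → ∀ q : ℤ → ℂ,
      l2norm N (K1h N f τ q) ≤ C * l2norm N q ∧
      l2norm N (stepTwoDiff (K1h N f τ q)) ≤ C * hgrid N * l2norm N q ∧
      l2norm N (stepTwoDiff (stepTwoDiff (K1h N f τ q))) ≤ C * hgrid N ^ 2 * l2norm N q := by
  obtain ⟨C, hC, hbound⟩ := exists_remainderKernel_bounds hfper hτper hf hτ hτ' hinj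
  refine ⟨8 * C, by positivity, fun N hN hev q => ?_⟩
  have hh := hgrid_pos hN
  have hq : 0 ≤ l2norm N q := Real.sqrt_nonneg _
  have hstep (i : ℤ) : gridPt N (i + 2) = gridPt N i + 2 * hgrid N := by
    rw [gridPt_add]; simp [gridPt]
  have hstep' (i : ℤ) : gridPt N (i + 2 + 2) = gridPt N i + 2 * (2 * hgrid N) := by
    rw [hstep, hstep]; ring
  have hkernel (i j : ℤ) (hj : j ∈ idxs N) (hodd : Odd (j - i)) :=
    hbound (gridPt N i) (gridPt N j) (2 * hgrid N) (abs_le.1 (abs_gridPt_le hN hj)) (by positivity)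
      (gridPt_sub_ne hN hev hodd)
      (by rw [← hstep]; exact gridPt_sub_ne hN hev ((odd_sub_add_iff even_two i j).2 hodd))
      (by
        rw [← hstep']
        exact gridPt_sub_ne hN hev
          ((odd_sub_add_iff even_two _ j).2 ((odd_sub_add_iff even_two i j).2 hodd)))
  refine ⟨?_, ?_, ?_⟩
  · refine (l2norm_odd_sum_le hN hev hC.le (K1h_eq N f τ q) fun i j hj hodd =>
      (hkernel i j hj hodd).1).trans ?_
    nlinarith [mul_nonneg hC.le hq]
  · refine (l2norm_odd_sum_le hN hev (by positivity : 0 ≤ C * (2 * hgrid N))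
      (stepTwoDiff_K1h N f τ q) fun i j hj hodd => ?_).trans ?_
    · rw [hstep]
      exact (hkernel i j hj hodd).2.1
    · nlinarith [mul_nonneg (mul_nonneg hC.le hh.le) hq]
  · refine (l2norm_odd_sum_le hN hev (by positivity : 0 ≤ C * (2 * hgrid N) ^ 2)
      (stepTwoDiff_stepTwoDiff_K1h N f τ q) fun i j hj hodd => ?_).trans_eq ?_
    · rw [hstep', hstep]
      exact (hkernel i j hj hodd).2.2
    · ring

theorem Ih_eq_neg_mul_Hh_add_K1h (N : ℤ) (f τ : ℝ → ℂ) (q : ℤ → ℂ) (i : ℤ) :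
    Ih N f τ q i =
      -(f (gridPt N i) / (2 * deriv τ (gridPt N i))) * Hh N q i + K1h N f τ q i := by
  rw [Ih, Hh, K1h, mul_left_comm, ← mul_add,
    Finset.mul_sum _ _ (-(f (gridPt N i) / _)), ← Finset.sum_add_distrib]
  congr 1
  refine Finset.sum_congr rfl fun j _ => ?_
  have hcot : Real.cot ((gridPt N i - gridPt N j) / 2) =
      -Real.cot ((gridPt N j - gridPt N i) / 2) := by
    rw [← neg_sub (gridPt N j), neg_div, Real.cot_eq_cos_div_sin, Real.cot_eq_cos_div_sin,
      Real.cos_neg, Real.sin_neg, div_neg]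
  rw [hcot]
  push_cast
  ring

end RemainderKernel

/-- Lemma 9.1: decomposition of `I_h` into a Hilbert-transform part
plus a smoothing remainder `K_{1h}`, with `K_{1h}(φ^p) = A_{-2}(φ)`. -/
theorem Ih_decomposition (f τ : ℝ → ℂ)
    (hfper : Function.Periodic f (2 * Real.pi)) (hτper : Function.Periodic τ (2 * Real.pi))
    (hf : ContDiff ℝ (⊤ : ℕ∞) f) (hτ : ContDiff ℝ (⊤ : ℕ∞) τ)
    (hτ' : ∀ α : ℝ, deriv τ α ≠ 0)
    (hinj : ∀ α β : ℝ, (¬ ∃ n : ℤ, α - β = n * (2 * Real.pi)) → τ α ≠ τ β)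
    (ρ : ℝ → ℝ) (hρ : IsFilter ρ) :
    (∀ N : ℤ, 2 ≤ N → Even N → ∀ q : ℤ → ℂ, ∀ i ∈ idxs N,
      Ih N f τ q i =
        -(f (gridPt N i) / (2 * deriv τ (gridPt N i))) * Hh N q i + K1h N f τ q i) ∧
    ∃ c : ℝ, 0 < c ∧ ∀ N : ℤ, 2 ≤ N → Even N → ∀ φ : ℤ → ℂ, ∀ k : ℕ, k ≤ 2 →
      l2norm N ((Dh N ρ)^[k] (K1h N f τ (filterP N ρ φ))) ≤ c * l2norm N φ := by
  refine ⟨fun N _ _ q i _ => Ih_eq_neg_mul_Hh_add_K1h N f τ q i, ?_⟩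
  obtain ⟨C, hC, hK⟩ := exists_l2norm_K1h_bounds hfper hτper hf hτ hτ' hinj
  obtain ⟨M, hM, hbound⟩ := hρ.exists_bound
  obtain ⟨B, hB, hsin⟩ := hρ.exists_mul_le_sin
  refine ⟨(1 + B + B ^ 2) * C * M, by positivity, fun N hN hev φ k hk => ?_⟩
  have hh := hgrid_pos hN
  obtain ⟨h0, h1, h2⟩ := hK N hN hev (filterP N ρ φ)
  have hper := K1h_periodic hN hev hfper hτper (filterP N ρ φ)
  have hq : 0 ≤ l2norm N (filterP N ρ φ) := Real.sqrt_nonneg _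
  have hCq := mul_nonneg hC.le hq
  have hfilter := l2norm_filterP_le hN hev hρ hM.le hbound φ
  suffices hmain : l2norm N ((Dh N ρ)^[k] (K1h N f τ (filterP N ρ φ))) ≤
      (1 + B + B ^ 2) * C * l2norm N (filterP N ρ φ) by
    refine hmain.trans ((mul_le_mul_of_nonneg_left hfilter (by positivity)).trans_eq ?_)
    ring
  interval_cases k
  · refine h0.trans ?_
    nlinarith [mul_nonneg hB.le hCq, mul_nonneg (sq_nonneg B) hCq]
  · have h := (l2norm_Dh_le hN hev hρ hB.le hsin hper).trans
      (mul_le_mul_of_nonneg_left h1 (by positivity))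
    have heq : B / hgrid N * (C * hgrid N * l2norm N (filterP N ρ φ)) =
        B * (C * l2norm N (filterP N ρ φ)) := by field_simp
    rw [heq] at h
    refine h.trans ?_
    nlinarith [mul_nonneg (sq_nonneg B) hCq]
  · have h := (l2norm_Dh_Dh_le hN hev hρ hsin hper).trans
      (mul_le_mul_of_nonneg_left h2 (by positivity))
    have heq : (B / hgrid N) ^ 2 * (C * hgrid N ^ 2 * l2norm N (filterP N ρ φ)) =
        B ^ 2 * (C * l2norm N (filterP N ρ φ)) := by field_simp
    rw [heq] at h
    refine h.trans ?_
    nlinarith [mul_nonneg hB.le hCq]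

end
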